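/- arXiv:1410.6697 — 2 statements merged into one kernel-verified Lean document; each statement's English description precedes it below -/
import Mathlib

section
/- Let k ≥ 2 and b ≥ 3 be integers and let K_{J(b)} be the set of numbers in [0,1] whose base-b expansion contains only the digits 0 and 1. Let Ψ : ℕ → (0,∞) satisfy Ψ(x) < 1/(2x) for all sufficiently large x and Ψ(l·x) ≤ l·Ψ(x) for all positive integers l, x. Then the set (𝒦_k(Ψ) \ ⋃_{0<c<1/(b−1)} 𝒦_k(cΨ)) ∩ K_{J(b)} is uncountable. -/
open Filter Set

/-- `Kk k Ψ` is the set of real `ζ` not algebraic of degree at most `k` such that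
`max_{1≤j≤k} |q·ζ^j - p_j| ≤ Ψ q` holds for infinitely many tuples
`(q, p₁, …, p_k) ∈ ℕ × ℤ^k` with `q ≥ 1`. -/
def Kk (k : ℕ) (Ψ : ℕ → ℝ) : Set ℝ :=
  {ζ : ℝ | (∀ P : Polynomial ℤ, P ≠ 0 → P.natDegree ≤ k → (Polynomial.aeval ζ) P ≠ 0) ∧
    {qp : ℕ × (Fin k → ℤ) | 1 ≤ qp.1 ∧
      ∀ j : Fin k, |(qp.1 : ℝ) * ζ ^ ((j : ℕ) + 1) - (qp.2 j : ℝ)| ≤ Ψ qp.1}.Infinite}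

/-- `baseExpSet b J` is the set of numbers in `[0,1]` admitting a base-`b` expansion all
of whose digits lie in `J`. -/
def baseExpSet (b : ℕ) (J : Set ℕ) : Set ℝ :=
  {x : ℝ | x ∈ Icc (0 : ℝ) 1 ∧ ∃ d : ℕ → ℕ, (∀ n, d n ∈ J) ∧
    x = ∑' n : ℕ, (d n : ℝ) / (b : ℝ) ^ (n + 1)}

/-!
If `q` simultaneously approximates the powers of a small `ζ` up to `Ψ q < 1 / (2 * q)`, then the
rational `r = p₁ / q` satisfies `r.den ^ j ∣ q` successively for `j = 1, …, k`. By
`Ψ (l * x) ≤ l * Ψ x`, membership of `ζ` in `Kk k Ψ` therefore only depends on the rationals `r`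
with `|ζ - r| ≤ φ r.den`, where `φ d = Ψ (d ^ k) / d ^ k < 1 / (2 * d ^ 4)`.

Take for `ζ` a limit of terminating expansions with digits `0` and `1`, each of which is
prolonged to end just inside the interval of length `φ` to its right: a run of ones or a single one
reaches at least about `φ / (b - 1)`, which excludes `c * φ` for `c < 1 / (b - 1)`. The denominators
grow so fast that every other rational `r` of large denominator `d` is further than `φ d` from `ζ`.
At each stage two choices of the last digit lead to disjoint intervals, so one of them avoids a
given real number, and a diagonal argument gives uncountability.
-/

theorem isClosed_baseExpSet {b : ℕ} (hb : 1 < b) {J : Set ℕ} (hJ : J.Finite) :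
    IsClosed (baseExpSet b J) := by
  have hb' : (1 : ℝ) < b := mod_cast hb
  set f : (ℕ → ℕ) → ℝ := fun d ↦ ∑' n, (d n : ℝ) / (b : ℝ) ^ (n + 1)
  have hf : ContinuousOn f (univ.pi fun _ ↦ J) := by
    obtain ⟨C, hC⟩ := hJ.bddAbove
    refine continuousOn_tsum (u := fun n ↦ C * (b : ℝ)⁻¹ ^ (n + 1)) (fun n ↦ ?_) ?_ ?_
    · exact (((continuous_of_discreteTopology (f := ((↑) : ℕ → ℝ))).comp
        (continuous_apply n)).div_const _).continuousOn
    · exact ((summable_nat_add_iff 1).2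
        (summable_geometric_of_lt_one (by positivity) (inv_lt_one_of_one_lt₀ hb'))).mul_left _
    · intro n d hd
      have hdC : (d n : ℝ) ≤ C := mod_cast hC (hd n trivial)
      rw [Real.norm_of_nonneg (by positivity), div_eq_mul_inv, inv_pow]
      gcongr
  have heq : baseExpSet b J = Icc 0 1 ∩ f '' univ.pi fun _ ↦ J := by
    ext x
    simp [baseExpSet, f, eq_comm]
  rw [heq]
  exact isClosed_Icc.inter
    ((isCompact_univ_pi fun _ ↦ hJ.isCompact).image_of_continuousOn hf).isClosed

/-- The terminating base-`b` expansion `∑ n ∈ S, b⁻⁽ⁿ⁺¹⁾`, with digit `1` at the positions in `S`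
(counted from `0` after the point, as in `baseExpSet`) and digit `0` elsewhere. -/
def digitSum (b : ℕ) (S : Finset ℕ) : ℚ :=
  ∑ n ∈ S, (b : ℚ)⁻¹ ^ (n + 1)

section DigitSum

variable {b : ℕ} {S T : Finset ℕ}

theorem cast_digitSum (b : ℕ) (S : Finset ℕ) :
    (digitSum b S : ℝ) = ∑ n ∈ S, (b : ℝ)⁻¹ ^ (n + 1) := by
  simp [digitSum]

theorem digitSum_union (h : Disjoint S T) :
    digitSum b (S ∪ T) = digitSum b S + digitSum b T :=
  Finset.sum_union h

theorem digitSum_insert {n : ℕ} (h : n ∉ S) :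
    digitSum b (insert n S) = digitSum b S + (b : ℚ)⁻¹ ^ (n + 1) := by
  rw [digitSum, Finset.sum_insert h, add_comm, digitSum]

theorem digitSum_singleton (b n : ℕ) : digitSum b {n} = (b : ℚ)⁻¹ ^ (n + 1) :=
  Finset.sum_singleton ..

theorem digitSum_mem_baseExpSet (hb : 2 ≤ b) (S : Finset ℕ) :
    (digitSum b S : ℝ) ∈ baseExpSet b {0, 1} := by
  have hb' : (2 : ℝ) ≤ b := mod_cast hb
  have hβ : (b : ℝ)⁻¹ < 1 := inv_lt_one_of_one_lt₀ (by linarith)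
  have hgeom : ∑' n : ℕ, (b : ℝ)⁻¹ ^ (n + 1) = 1 / (b - 1) := by
    simp only [pow_succ, tsum_mul_right, tsum_geometric_of_lt_one (inv_nonneg.2 b.cast_nonneg) hβ]
    have : (b : ℝ) - 1 ≠ 0 := by linarith
    field_simp
  rw [cast_digitSum]
  refine ⟨⟨by positivity, ?_⟩, fun n ↦ if n ∈ S then 1 else 0, fun n ↦ ?_, ?_⟩
  · calc ∑ n ∈ S, (b : ℝ)⁻¹ ^ (n + 1) ≤ ∑' n : ℕ, (b : ℝ)⁻¹ ^ (n + 1) :=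
          ((summable_nat_add_iff 1).2 (summable_geometric_of_lt_one (by positivity) hβ)).sum_le_tsum
            S fun _ _ ↦ by positivity
      _ = 1 / (b - 1) := hgeom
      _ ≤ 1 := by rw [div_le_one (by linarith)]; linarith
  · dsimp only
    split_ifs <;> simp
  · rw [tsum_eq_sum (s := S) fun n hn ↦ by simp [hn]]
    exact Finset.sum_congr rfl fun n hn ↦ by simp [hn]

-- The numerator over `b ^ (n + 1)` is `1` modulo `b`.
theorem den_digitSum_insert {n : ℕ} (hb : 0 < b) (hn : ∀ m ∈ S, m < n) :
    (digitSum b (insert n S)).den = b ^ (n + 1) := by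
  have : (b : ℚ) ≠ 0 := mod_cast hb.ne'
  set N : ℕ := b * ∑ m ∈ S, b ^ (n - m - 1) + 1 with hN
  have hval : digitSum b (insert n S) = ((N : ℤ) : ℚ) / ((b ^ (n + 1) : ℕ) : ℤ) := by
    rw [digitSum_insert fun h ↦ (hn n h).false, digitSum, hN]
    push_cast
    rw [add_div, inv_pow, one_div, Finset.mul_sum, Finset.sum_div]
    simp only [inv_pow]
    congr 1
    refine Finset.sum_congr rfl fun m hm ↦ ?_
    obtain ⟨i, rfl⟩ := Nat.exists_eq_add_of_lt (hn m hm)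
    rw [show m + i + 1 - m - 1 = i by omega]
    field_simp
    ring
  have hcop : N.Coprime (b ^ (n + 1)) := Nat.Coprime.pow_right _ (by simp [hN, Nat.Coprime])
  have hden := Rat.den_div_eq_of_coprime (a := N) (b := (b ^ (n + 1) : ℕ)) (by positivity)
    (by simpa only [Int.natAbs_natCast] using hcop)
  rw [hval]
  exact_mod_cast hden

theorem exists_subset_range_den_digitSum (hb : 0 < b) (S : Finset ℕ) :
    ∃ e, S ⊆ Finset.range e ∧ (digitSum b S).den = b ^ e := by
  induction S using Finset.induction_on_max with
  | empty => exact ⟨0, by simp [digitSum]⟩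
  | insert n S hn _ =>
    refine ⟨n + 1, fun m hm ↦ ?_, den_digitSum_insert hb hn⟩
    rcases Finset.mem_insert.1 hm with rfl | hm
    · simp
    · exact Finset.mem_range.2 ((hn m hm).trans n.lt_succ_self)

theorem sub_one_mul_digitSum_Ico (hb : 0 < b) (M L : ℕ) :
    ((b : ℝ) - 1) * digitSum b (Finset.Ico M (M + L)) = (b : ℝ)⁻¹ ^ M * (1 - (b : ℝ)⁻¹ ^ L) := by
  have : (b : ℝ) ≠ 0 := mod_cast hb.ne'
  have hβ' : 1 - (b : ℝ)⁻¹ = ((b : ℝ) - 1) * (b : ℝ)⁻¹ := by field_simp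
  have hsum := geom_sum_Ico_mul_neg (b : ℝ)⁻¹ (Nat.le_add_right M L)
  rw [hβ'] at hsum
  simp only [cast_digitSum, pow_succ, ← Finset.sum_mul]
  linear_combination hsum - pow_add (b : ℝ)⁻¹ M L

theorem digitSum_Ico_approx (hb : 2 ≤ b) {M L : ℕ} {f : ℝ} (hL : (b : ℝ)⁻¹ ^ L ≤ 1 / 2)
    (hf : f ≤ (b : ℝ)⁻¹ ^ M * (1 + (b : ℝ)⁻¹ ^ L)) (hM : (b : ℝ)⁻¹ ^ M ≤ f * (b - 1)) :
    f / (b - 1) * (1 - 2 * (b : ℝ)⁻¹ ^ L) ≤ digitSum b (Finset.Ico M (M + L)) ∧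
      digitSum b (Finset.Ico M (M + L)) + (b : ℝ)⁻¹ ^ (M + L + 1) ≤ f := by
  have hb' : (2 : ℝ) ≤ b := mod_cast hb
  have hsum := sub_one_mul_digitSum_Ico (b := b) (by omega) M L
  set x := (b : ℝ)⁻¹ ^ L with hx
  set y := (b : ℝ)⁻¹ ^ M with hy
  have hx0 : 0 < x := by positivity
  have hy0 : 0 < y := by positivity
  constructor
  · rw [div_mul_eq_mul_div, div_le_iff₀ (by linarith), mul_comm _ ((b : ℝ) - 1), hsum]
    calc f * (1 - 2 * x) ≤ y * (1 + x) * (1 - 2 * x) := by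
          gcongr; linarith
      _ ≤ y * (1 - x) := by nlinarith [mul_pos hy0 (mul_pos hx0 hx0)]
  · have hslack : ((b : ℝ) - 1) * (b : ℝ)⁻¹ ^ (M + L + 1) = y * x * (1 - (b : ℝ)⁻¹) := by
      rw [hx, hy, pow_succ, pow_add]; field_simp
    have : 0 < y * x * (b : ℝ)⁻¹ := by positivity
    refine le_of_mul_le_mul_left ?_ (by linarith : (0 : ℝ) < b - 1)
    rw [mul_add, hsum, hslack]
    linarith

theorem digitSum_singleton_approx (hb : 3 ≤ b) {M L : ℕ} {f : ℝ}
    (hM : (b : ℝ)⁻¹ ^ (M + 1) * (1 + (b : ℝ)⁻¹ ^ L) ≤ f) (hf : f * (b - 1) ≤ (b : ℝ)⁻¹ ^ M) :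
    f / (b - 1) * (1 - 2 * (b : ℝ)⁻¹ ^ L) ≤ digitSum b {M} ∧
      digitSum b {M} + (b : ℝ)⁻¹ ^ (M + L + 1) ≤ f := by
  have hb' : (3 : ℝ) ≤ b := mod_cast hb
  have hx0 : 0 < (b : ℝ)⁻¹ ^ L := by positivity
  have hf0 : 0 ≤ f := le_trans (by positivity) hM
  have hval : (digitSum b {M} : ℝ) = (b : ℝ)⁻¹ ^ (M + 1) := by simp [digitSum_singleton]
  rw [hval]
  constructor
  · calc f / (b - 1) * (1 - 2 * (b : ℝ)⁻¹ ^ L) ≤ f / (b - 1) :=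
          mul_le_of_le_one_right (div_nonneg hf0 (by linarith)) (by linarith)
      _ ≤ f * (b - 1) * (b : ℝ)⁻¹ := by
          rw [← div_eq_mul_inv, div_le_div_iff₀ (by linarith) (by linarith), mul_assoc]
          gcongr
          nlinarith
      _ ≤ (b : ℝ)⁻¹ ^ (M + 1) := by rw [pow_succ]; gcongr
  · calc (b : ℝ)⁻¹ ^ (M + 1) + (b : ℝ)⁻¹ ^ (M + L + 1)
        = (b : ℝ)⁻¹ ^ (M + 1) * (1 + (b : ℝ)⁻¹ ^ L) := by ring
      _ ≤ f := hM

-- With `M` the order of magnitude of `f`, take a run of `L` ones starting at position `M` if it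
-- stays below `f`, and otherwise a single `1` at position `M`, which is then close enough to `f`.
theorem exists_digitSum_approx (hb : 3 ≤ b) {L : ℕ} (hL : 1 ≤ L) {f : ℝ} (hf0 : 0 < f)
    (hf1 : f ≤ 1) :
    ∃ M, ∃ T ⊆ Finset.Ico M (M + L), (b : ℝ)⁻¹ ^ (M + 1) < f ∧ f ≤ 2 * (b : ℝ)⁻¹ ^ M ∧
      f / (b - 1) * (1 - 2 * (b : ℝ)⁻¹ ^ L) ≤ digitSum b T ∧
      digitSum b T + (b : ℝ)⁻¹ ^ (M + L + 1) ≤ f := by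
  have hb' : (3 : ℝ) ≤ b := mod_cast hb
  have hβ0 : 0 < (b : ℝ)⁻¹ := by positivity
  have hβ : (b : ℝ)⁻¹ ≤ 1 / 2 := by
    rw [one_div]; exact inv_anti₀ (by norm_num) (by linarith)
  have hx0 : 0 < (b : ℝ)⁻¹ ^ L := by positivity
  have hx : (b : ℝ)⁻¹ ^ L ≤ 1 / 2 :=
    (pow_le_of_le_one hβ0.le (by linarith) (by omega)).trans hβ
  obtain ⟨M, hMlt, hMle⟩ := exists_nat_pow_near_of_lt_one (x := f / (1 + (b : ℝ)⁻¹ ^ L))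
    (by positivity) (by rw [div_le_one (by positivity)]; linarith) hβ0 (by linarith)
  rw [lt_div_iff₀ (by positivity)] at hMlt
  rw [div_le_iff₀ (by positivity)] at hMle
  have hM0 : 0 < (b : ℝ)⁻¹ ^ M := by positivity
  have hM1 : 0 < (b : ℝ)⁻¹ ^ (M + 1) := by positivity
  have hlt : (b : ℝ)⁻¹ ^ (M + 1) < f := by nlinarith
  have hle : f ≤ 2 * (b : ℝ)⁻¹ ^ M := by nlinarith
  rcases le_total ((b : ℝ)⁻¹ ^ M) (f * (b - 1)) with hones | hone
  · exact ⟨M, _, subset_rfl, hlt, hle, digitSum_Ico_approx (by omega) hx hMle hones⟩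
  · exact ⟨M, {M}, Finset.singleton_subset_iff.2 (Finset.mem_Ico.2 ⟨le_rfl, by omega⟩), hlt, hle,
      digitSum_singleton_approx hb hMlt.le hone⟩

end DigitSum

/-- The filter on `ℚ` along which the denominators tend to infinity; eventually along it means
for all rationals of sufficiently large denominator. -/
def denAtTop : Filter ℚ :=
  comap Rat.den atTop

theorem frequently_denAtTop {p : ℚ → Prop} :
    (∃ᶠ r in denAtTop, p r) ↔ ∀ m, ∃ r, m ≤ r.den ∧ p r := by
  simp [denAtTop, (atTop_basis.comap Rat.den).frequently_iff]

theorem tendsto_den_denAtTop : Tendsto Rat.den denAtTop atTop :=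
  tendsto_comap

theorem denAtTop_le_cofinite : denAtTop ≤ cofinite := by
  rw [denAtTop, ← Nat.cofinite_eq_atTop]
  exact comap_cofinite_le _

theorem one_div_den_mul_den_le_abs_sub {r s : ℚ} (h : r ≠ s) :
    1 / ((r.den : ℝ) * s.den) ≤ |(r : ℝ) - s| := by
  have hr : (0 : ℝ) < r.den := mod_cast r.pos
  have hs : (0 : ℝ) < s.den := mod_cast s.pos
  have hint : ((r.num * s.den - s.num * r.den : ℤ) : ℝ) = (r - s) * (r.den * s.den) := by
    have hr' : (r : ℝ) * r.den = r.num := mod_cast r.mul_den_eq_num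
    have hs' : (s : ℝ) * s.den = s.num := mod_cast s.mul_den_eq_num
    push_cast
    linear_combination r.den * hs' - s.den * hr'
  have hne : (r.num * s.den - s.num * r.den : ℤ) ≠ 0 :=
    sub_ne_zero.2 fun hrs ↦ h (Rat.eq_iff_mul_eq_mul.2 hrs)
  rw [div_le_iff₀ (by positivity), ← abs_of_pos (mul_pos hr hs), ← abs_mul, ← hint]
  exact_mod_cast Int.one_le_abs hne

section Gap

variable {t : ℕ → ℚ} {r : ℚ} {ζ : ℝ}

theorem one_div_two_mul_den_pow_le_abs_sub {n : ℕ} (hn : n ≠ 0) {s : ℚ} {Q : ℕ}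
    (hrs : r ≠ s) (hsr : s.den ≤ r.den ^ n) (hrQ : r.den ^ n ≤ Q)
    (hs : (2 * s.den * |ζ - s|) ^ n * Q ≤ 1) :
    1 / (2 * (r.den : ℝ) ^ (n + 1)) ≤ |ζ - r| := by
  have : (0 : ℝ) < r.den := mod_cast r.pos
  have : (0 : ℝ) < s.den := mod_cast s.pos
  have hsmall : 2 * s.den * |ζ - s| * r.den ≤ 1 := by
    refine (pow_le_one_iff_of_nonneg (by positivity) hn).1 ?_
    calc (2 * s.den * |ζ - s| * r.den) ^ n = (2 * s.den * |ζ - s|) ^ n * (r.den ^ n : ℕ) := by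
          rw [mul_pow _ (r.den : ℝ), Nat.cast_pow]
      _ ≤ (2 * s.den * |ζ - s|) ^ n * Q := by gcongr
      _ ≤ 1 := hs
  have hdist : |ζ - s| ≤ 1 / (2 * (r.den * s.den)) := by
    rw [le_div_iff₀ (by positivity)]
    linarith
  have hpow : (s.den : ℝ) ≤ r.den ^ n := mod_cast hsr
  calc 1 / (2 * (r.den : ℝ) ^ (n + 1)) ≤ 1 / (2 * (r.den * s.den)) := by
        rw [pow_succ']; gcongr
    _ = 1 / (r.den * s.den) - 1 / (2 * (r.den * s.den)) := by field_simp; norm_num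
    _ ≤ |(r : ℝ) - s| - |ζ - s| := sub_le_sub (one_div_den_mul_den_le_abs_sub hrs) hdist
    _ ≤ |ζ - r| := by
        rw [abs_sub_comm ζ r, sub_le_iff_le_add]
        exact abs_sub_le _ _ _

theorem eventually_one_div_two_mul_den_pow_le_abs_sub {n : ℕ} (hn : n ≠ 0)
    (ht : StrictMono fun m ↦ (t m).den)
    (hζ : ∀ m, (2 * (t m).den * |ζ - t m|) ^ n * (t (m + 1)).den ≤ 1) :
    ∀ᶠ r in denAtTop, r ∉ range t → 1 / (2 * (r.den : ℝ) ^ (n + 1)) ≤ |ζ - r| := by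
  filter_upwards [tendsto_den_denAtTop.eventually_gt_atTop (t 0).den] with r hr hrt
  obtain ⟨m, hm, hm'⟩ := ht.exists_between_of_tendsto_atTop ht.tendsto_atTop
    (x := r.den ^ n) (hr.trans_le (Nat.le_self_pow hn _))
  exact one_div_two_mul_den_pow_le_abs_sub hn (fun h ↦ hrt ⟨m, h.symm⟩) hm.le hm' (hζ m)

end Gap

/-- One step of the inductive construction: the truncation `s` of the expansion is prolonged to `t`,
which still lies within `φ` of `s` from above (`add_le`), but no closer than about `1 / (b - 1)`
times that (`le_sub`), and its denominator is so large that `s` is the only good approximation for a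
long time (`pow_mul_le`). All later prolongations have values in `(t, t + φ t.den]`, so that `z` is
avoided for good. -/
structure IsStep (b : ℕ) (φ : ℕ → ℝ) (z : ℝ) (s t : ℚ) : Prop where
  den_lt : s.den < t.den
  lt : s < t
  le_sub : φ s.den / (b - 1) * (1 - 2 / s.den) ≤ t - s
  add_le : t + φ t.den ≤ s + φ s.den
  pow_mul_le : (2 * s.den * φ s.den) ^ 3 * t.den ≤ 1
  avoids : z ∉ Ioc (t : ℝ) (t + φ t.den)

theorem two_mul_inv_pow_succ_le {b : ℕ} (hb : 2 ≤ b) (n : ℕ) :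
    2 * (b : ℝ)⁻¹ ^ (n + 1) ≤ (b : ℝ)⁻¹ ^ n := by
  have hb' : (2 : ℝ) ≤ b := mod_cast hb
  rw [pow_succ, ← div_eq_mul_inv, mul_div_assoc', div_le_iff₀ (by positivity), mul_comm]
  gcongr

-- The two candidates for the final digit lead to disjoint intervals.
theorem exists_notMem_Ioc {b : ℕ} (hb : 2 ≤ b) {φ : ℕ → ℝ} {n : ℕ} (x z : ℝ)
    (hφ : φ (b ^ (n + 2)) ≤ (b : ℝ)⁻¹ ^ (n + 2)) :
    ∃ m, n ≤ m ∧ m ≤ n + 1 ∧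
      z ∉ Ioc (x + (b : ℝ)⁻¹ ^ (m + 1)) (x + (b : ℝ)⁻¹ ^ (m + 1) + φ (b ^ (m + 1))) := by
  by_cases hz : z ≤ x + (b : ℝ)⁻¹ ^ (n + 1)
  · exact ⟨n, le_rfl, by omega, fun h ↦ h.1.not_ge hz⟩
  · refine ⟨n + 1, by omega, le_rfl, fun h ↦ hz (h.2.trans ?_)⟩
    linarith [two_mul_inv_pow_succ_le hb (n + 1)]

theorem two_mul_pow_mul_le_one {b e M n : ℕ} {f : ℝ} (hb : 2 ≤ b) (hf0 : 0 ≤ f)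
    (hf : f ≤ 2 * (b : ℝ)⁻¹ ^ M) (hM : 3 * e + n + 6 ≤ 3 * M) :
    (2 * (b : ℝ) ^ e * f) ^ 3 * (b : ℝ) ^ n ≤ 1 := by
  have hb' : (2 : ℝ) ≤ b := mod_cast hb
  calc (2 * (b : ℝ) ^ e * f) ^ 3 * (b : ℝ) ^ n
      ≤ (b * (b : ℝ) ^ e * (b * (b : ℝ)⁻¹ ^ M)) ^ 3 * (b : ℝ) ^ n := by
        gcongr
        exact hf.trans (by gcongr)
    _ = (b : ℝ) ^ (3 * e + n + 6) * (b : ℝ)⁻¹ ^ (3 * M) := by ring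
    _ ≤ (b : ℝ) ^ (3 * M) * (b : ℝ)⁻¹ ^ (3 * M) := by gcongr; linarith
    _ = 1 := by rw [← mul_pow, mul_inv_cancel₀ (by positivity), one_pow]

theorem digitSum_insert_union {b e M L n : ℕ} (hb : 0 < b) {S T : Finset ℕ}
    (hS : S ⊆ Finset.range e) (hT : T ⊆ Finset.Ico M (M + L)) (he : e ≤ M) (hn : M + L ≤ n) :
    (digitSum b (insert n (S ∪ T))).den = b ^ (n + 1) ∧
      digitSum b (insert n (S ∪ T)) = digitSum b S + digitSum b T + (b : ℚ)⁻¹ ^ (n + 1) := by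
  have hS' : ∀ m ∈ S, m < e := fun m hm ↦ Finset.mem_range.1 (hS hm)
  have hT' : ∀ m ∈ T, M ≤ m ∧ m < M + L := fun m hm ↦ Finset.mem_Ico.1 (hT hm)
  have hlt : ∀ m ∈ S ∪ T, m < n := by grind
  refine ⟨den_digitSum_insert hb hlt, ?_⟩
  rw [digitSum_insert fun h ↦ (hlt n h).false, digitSum_union]
  exact Finset.disjoint_left.2 fun m hm hm' ↦
    ((hS' m hm).trans_le (he.trans (hT' m hm').1)).false

theorem exists_isStep_of_subset_range {b e : ℕ} (hb : 3 ≤ b) (he : 3 ≤ e) {φ : ℕ → ℝ}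
    (hφ : ∀ i ≥ e, 0 < φ (b ^ i) ∧ φ (b ^ i) < (b : ℝ)⁻¹ ^ (4 * i)) {S : Finset ℕ}
    (hS : S ⊆ Finset.range e) (hden : (digitSum b S).den = b ^ e) (z : ℝ) :
    ∃ S', IsStep b φ z (digitSum b S) (digitSum b S') := by
  have hb' : (3 : ℝ) ≤ b := mod_cast hb
  have hβ0 : 0 < (b : ℝ)⁻¹ := by positivity
  have hβ1 : (b : ℝ)⁻¹ < 1 := inv_lt_one_of_one_lt₀ (by linarith)
  have hφle : ∀ i ≥ e, φ (b ^ i) ≤ (b : ℝ)⁻¹ ^ i := fun i hi ↦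
    (hφ i hi).2.le.trans (pow_le_pow_of_le_one hβ0.le hβ1.le (by omega))
  obtain ⟨hf0, hf⟩ := hφ e le_rfl
  obtain ⟨M, T, hT, hMlt, hMle, hlow, hup⟩ := exists_digitSum_approx hb (L := e) (by omega) hf0
    (hf.le.trans (pow_le_one₀ hβ0.le hβ1.le))
  have hM : 4 * e < M + 1 := (pow_lt_pow_iff_right_of_lt_one₀ hβ0 hβ1).1 (hMlt.trans hf)
  obtain ⟨n, hn, hn', hz⟩ := exists_notMem_Ioc (n := M + e + 1) (b := b) (by omega)
    (digitSum b S + digitSum b T) z (hφle _ (by omega))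
  obtain ⟨hden', hval⟩ :=
    digitSum_insert_union (b := b) (n := n) (by omega) hS hT (by omega) (by omega)
  replace hval : (digitSum b (insert n (S ∪ T)) : ℝ) =
    digitSum b S + digitSum b T + (b : ℝ)⁻¹ ^ (n + 1) := by
      rw [hval]
      push_cast
      rfl
  have hβn : 0 < (b : ℝ)⁻¹ ^ (n + 1) := by positivity
  refine ⟨insert n (S ∪ T), ?_, ?_, ?_, ?_, ?_, ?_⟩
  · rw [hden, hden']
    exact Nat.pow_lt_pow_right (by omega) (by omega)
  · have : 0 ≤ (digitSum b T : ℝ) := by rw [cast_digitSum]; positivity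
    have : (digitSum b S : ℝ) < digitSum b (insert n (S ∪ T)) := by linarith
    exact_mod_cast this
  · rw [hden, Nat.cast_pow, div_eq_mul_inv 2, ← inv_pow]
    linarith
  · have hpow : (b : ℝ)⁻¹ ^ (n + 1) ≤ (b : ℝ)⁻¹ ^ (M + e + 2) :=
      pow_le_pow_of_le_one hβ0.le hβ1.le (by omega)
    have hslack := two_mul_inv_pow_succ_le (b := b) (by omega) (M + e + 1)
    rw [hden, hden']
    linarith [hφle (n + 1) (by omega)]
  · rw [hden, hden', Nat.cast_pow, Nat.cast_pow]
    exact two_mul_pow_mul_le_one (by omega) hf0.le hMle (by omega)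
  · rwa [hden', hval]

theorem exists_isStep {b : ℕ} (hb : 3 ≤ b) {φ : ℕ → ℝ} {N : ℕ} (hN : b ^ 3 ≤ N)
    (hφ : ∀ q ≥ N, 0 < φ q ∧ φ q < 1 / (2 * (q : ℝ) ^ 4)) {S : Finset ℕ}
    (hS : N ≤ (digitSum b S).den) (z : ℝ) :
    ∃ S', IsStep b φ z (digitSum b S) (digitSum b S') := by
  obtain ⟨e, hSe, hden⟩ := exists_subset_range_den_digitSum (b := b) (by omega) S
  have he : 3 ≤ e :=
    (Nat.pow_le_pow_iff_right (a := b) (by omega)).1 (hN.trans (hS.trans hden.le))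
  refine exists_isStep_of_subset_range hb he (fun i hi ↦ ?_) hSe hden z
  obtain ⟨h0, h⟩ := hφ (b ^ i) (hS.trans (hden.trans_le (Nat.pow_le_pow_right (by omega) hi)))
  refine ⟨h0, h.trans_le ?_⟩
  have : 0 < ((b : ℝ) ^ i) ^ 4 := by positivity
  rw [inv_pow, mul_comm 4 i, pow_mul, ← one_div, Nat.cast_pow]
  gcongr
  linarith

section Chain

variable {b : ℕ} {φ : ℕ → ℝ} {z : ℕ → ℝ} {t : ℕ → ℚ}

theorem exists_tendsto_of_isStep (hφ : ∀ n, 0 ≤ φ (t n).den)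
    (ht : ∀ n, IsStep b φ (z n) (t n) (t (n + 1))) :
    ∃ ζ : ℝ, Tendsto (fun n ↦ (t n : ℝ)) atTop (nhds ζ) ∧
      ∀ n, ζ ∈ Ioc (t n : ℝ) (t n + φ (t n).den) := by
  have hmono : StrictMono fun n ↦ (t n : ℝ) :=
    strictMono_nat_of_lt_succ fun n ↦ Rat.cast_lt.2 (ht n).lt
  have hanti : Antitone fun n ↦ (t n : ℝ) + φ (t n).den :=
    antitone_nat_of_succ_le fun n ↦ (ht n).add_le
  have hmem := hmono.monotone.ciSup_mem_iInter_Icc_of_antitone hanti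
    fun n ↦ le_add_of_nonneg_right (hφ n)
  rw [mem_iInter] at hmem
  refine ⟨⨆ n, (t n : ℝ), tendsto_atTop_ciSup hmono.monotone ⟨t 0 + φ (t 0).den, ?_⟩,
    fun n ↦ ⟨(hmono n.lt_succ_self).trans_le (hmem (n + 1)).1, (hmem n).2⟩⟩
  rintro _ ⟨n, rfl⟩
  exact (le_add_of_nonneg_right (hφ n)).trans (hanti n.zero_le)

variable {ζ : ℝ} (ht : ∀ n, IsStep b φ (z n) (t n) (t (n + 1)))
  (hζ : ∀ n, ζ ∈ Ioc (t n : ℝ) (t n + φ (t n).den))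

include ht hζ

theorem notMem_range_of_isStep : ζ ∉ range z := by
  rintro ⟨n, rfl⟩
  exact (ht n).avoids (hζ (n + 1))

theorem frequently_abs_sub_le_of_isStep : ∃ᶠ r : ℚ in denAtTop, |ζ - r| ≤ φ r.den := by
  have hmono : StrictMono fun n ↦ (t n).den := strictMono_nat_of_lt_succ fun n ↦ (ht n).den_lt
  refine frequently_denAtTop.2 fun m ↦ ⟨t m, hmono.le_apply, ?_⟩
  rw [abs_of_pos (sub_pos.2 (hζ m).1)]
  linarith [(hζ m).2]

theorem eventually_one_div_le_abs_sub_of_isStep :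
    ∀ᶠ r in denAtTop, r ∉ range t → 1 / (2 * (r.den : ℝ) ^ 4) ≤ |ζ - r| := by
  refine eventually_one_div_two_mul_den_pow_le_abs_sub three_ne_zero
    (strictMono_nat_of_lt_succ fun n ↦ (ht n).den_lt) fun n ↦ le_trans ?_ (ht n).pow_mul_le
  have : |ζ - t n| ≤ φ (t n).den := by
    rw [abs_of_pos (sub_pos.2 (hζ n).1)]
    linarith [(hζ n).2]
  gcongr

theorem eventually_mul_lt_abs_sub_of_isStep (hb : 2 ≤ b)
    (hφ : ∀ᶠ q in atTop, 0 < φ q ∧ φ q < 1 / (2 * (q : ℝ) ^ 4)) {c : ℝ}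
    (hc : c < 1 / ((b : ℝ) - 1)) : ∀ᶠ r : ℚ in denAtTop, c * φ r.den < |ζ - r| := by
  have hb' : (2 : ℝ) ≤ b := mod_cast hb
  have hc1 : c < 1 := hc.trans_le ((div_le_one (by linarith)).2 (by linarith))
  have hlim : Tendsto (fun q : ℕ ↦ 1 / ((b : ℝ) - 1) * (1 - 2 / q)) atTop
      (nhds (1 / ((b : ℝ) - 1))) := by
    simpa using ((tendsto_const_div_atTop_nhds_zero_nat (2 : ℝ)).const_sub 1).const_mul
      (1 / ((b : ℝ) - 1))
  filter_upwards [eventually_one_div_le_abs_sub_of_isStep ht hζ,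
    tendsto_den_denAtTop.eventually hφ,
    tendsto_den_denAtTop.eventually (hlim.eventually_const_lt hc)] with r hgap ⟨h0, hlt⟩ hcr
  by_cases hr : r ∈ range t
  · obtain ⟨n, rfl⟩ := hr
    calc c * φ (t n).den < 1 / ((b : ℝ) - 1) * (1 - 2 / (t n).den) * φ (t n).den := by gcongr
      _ = φ (t n).den / (b - 1) * (1 - 2 / (t n).den) := by ring
      _ ≤ t (n + 1) - t n := (ht n).le_sub
      _ ≤ ζ - t n := by gcongr; exact (hζ (n + 1)).1.le
      _ ≤ |ζ - t n| := le_abs_self _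
  · calc c * φ r.den < φ r.den := mul_lt_of_lt_one_left h0 hc1
      _ ≤ |ζ - r| := hlt.le.trans (hgap hr)

end Chain

theorem exists_isStep_sequence {b : ℕ} (hb : 3 ≤ b) {φ : ℕ → ℝ} {N : ℕ} (hN : b ^ 3 ≤ N)
    (hφ : ∀ q ≥ N, 0 < φ q ∧ φ q < 1 / (2 * (q : ℝ) ^ 4)) (z : ℕ → ℝ) :
    ∃ S : ℕ → Finset ℕ, S 0 = {N} ∧ (∀ n, N ≤ (digitSum b (S n)).den) ∧
      ∀ n, IsStep b φ (z n) (digitSum b (S n)) (digitSum b (S (n + 1))) := by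
  have hden : (digitSum b {N}).den = b ^ (N + 1) := by
    simpa using den_digitSum_insert (b := b) (S := ∅) (n := N) (by omega) (by simp)
  have hstart : N ≤ (digitSum b {N}).den :=
    hden ▸ (Nat.lt_pow_self (by omega)).le.trans (Nat.pow_le_pow_right (by omega) N.le_succ)
  choose! next hnext using fun (S : Finset ℕ) (hS : N ≤ (digitSum b S).den) ↦
    exists_isStep hb hN hφ hS
  let S : ℕ → Finset ℕ := Nat.rec {N} fun n S ↦ next S (z n)
  have hS : ∀ n, N ≤ (digitSum b (S n)).den := fun n ↦ by
    induction n with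
    | zero => exact hstart
    | succ n ih => exact ih.trans (hnext _ ih (z n)).den_lt.le
  exact ⟨S, rfl, hS, fun n ↦ hnext _ (hS n) (z n)⟩

theorem exists_mem_baseExpSet_frequently_eventually {b : ℕ} (hb : 3 ≤ b) {φ : ℕ → ℝ}
    (hφ : ∀ᶠ q in atTop, 0 < φ q ∧ φ q < 1 / (2 * (q : ℝ) ^ 4)) (z : ℕ → ℝ) :
    ∃ ζ ∈ baseExpSet b {0, 1}, ζ ≤ 1 / 3 ∧ ζ ∉ range z ∧
      (∃ᶠ r : ℚ in denAtTop, |ζ - r| ≤ φ r.den) ∧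
      ∀ c < 1 / ((b : ℝ) - 1), ∀ᶠ r : ℚ in denAtTop, c * φ r.den < |ζ - r| := by
  obtain ⟨N, hN⟩ := (hφ.and (eventually_ge_atTop (b ^ 3))).exists_forall_of_atTop
  have hb3 : b ^ 3 ≤ N := (hN N le_rfl).2
  obtain ⟨S, hS0, hSN, hS⟩ := exists_isStep_sequence hb hb3 (fun q hq ↦ (hN q hq).1) z
  have hpos : ∀ n, 0 < φ (digitSum b (S n)).den := fun n ↦ (hN _ (hSN n)).1.1
  obtain ⟨ζ, hlim, hζ⟩ := exists_tendsto_of_isStep (fun n ↦ (hpos n).le) hS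
  refine ⟨ζ, ?_, ?_, notMem_range_of_isStep hS hζ, frequently_abs_sub_le_of_isStep hS hζ,
    fun c hc ↦ eventually_mul_lt_abs_sub_of_isStep hS hζ (by omega) hφ hc⟩
  · exact (isClosed_baseExpSet (by omega) (by simp)).mem_of_tendsto hlim
      (.of_forall fun n ↦ digitSum_mem_baseExpSet (by omega) _)
  · have hb' : (3 : ℝ) ≤ b := mod_cast hb
    have hN2 : 2 ≤ N :=
      (Nat.le_self_pow three_ne_zero 2).trans ((Nat.pow_le_pow_left (by omega) 3).trans hb3)
    have hden : 2 ≤ (digitSum b (S 0)).den := hN2.trans (hSN 0)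
    have hfirst : (digitSum b (S 0) : ℝ) ≤ 1 / 9 := by
      rw [hS0, digitSum_singleton]
      push_cast
      calc (b : ℝ)⁻¹ ^ (N + 1) ≤ (b : ℝ)⁻¹ ^ 2 :=
            pow_le_pow_of_le_one (by positivity) (inv_le_one_of_one_le₀ (by linarith)) (by omega)
        _ ≤ (3 : ℝ)⁻¹ ^ 2 := by gcongr
        _ = 1 / 9 := by norm_num
    have hφ0 : φ (digitSum b (S 0)).den ≤ 1 / (2 * 2 ^ 4) :=
      (hN _ (hSN 0)).1.2.le.trans (by gcongr; exact_mod_cast hden)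
    linarith [(hζ 0).2]

theorem abs_pow_succ_sub_pow_succ_le {x y : ℝ} (hx : |x| ≤ 1 / 2) (hy : |y| ≤ 1 / 2) (j : ℕ) :
    |x ^ (j + 1) - y ^ (j + 1)| ≤ |x - y| := by
  have hj : ((j + 1 : ℕ) : ℝ) ≤ 2 ^ j := mod_cast Nat.succ_le_of_lt j.lt_two_pow_self
  calc |x ^ (j + 1) - y ^ (j + 1)| ≤ |x - y| * (j + 1 : ℕ) * max |x| |y| ^ j :=
        abs_pow_sub_pow_le x y (j + 1)
    _ ≤ |x - y| * 2 ^ j * (1 / 2) ^ j := by gcongr; exact max_le hx hy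
    _ = |x - y| := by rw [mul_assoc, ← mul_pow]; norm_num

/-- The powers `ζ, …, ζ ^ k` are simultaneously approximated, up to `ε` after multiplication by `q`,
by rationals with denominator `q`. The index `j : Fin k` stands for the exponent `j + 1`. -/
def IsPowApprox (k : ℕ) (ζ : ℝ) (q : ℕ) (ε : ℝ) : Prop :=
  ∃ p : Fin k → ℤ, ∀ j : Fin k, |(q : ℝ) * ζ ^ ((j : ℕ) + 1) - p j| ≤ ε

theorem infinite_setOf_powApprox_iff {k : ℕ} {ζ : ℝ} {Ψ : ℕ → ℝ} :
    {qp : ℕ × (Fin k → ℤ) | 1 ≤ qp.1 ∧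
      ∀ j : Fin k, |(qp.1 : ℝ) * ζ ^ ((j : ℕ) + 1) - (qp.2 j : ℝ)| ≤ Ψ qp.1}.Infinite ↔
      ∃ᶠ q in atTop, IsPowApprox k ζ q (Ψ q) := by
  set A := {qp : ℕ × (Fin k → ℤ) | 1 ≤ qp.1 ∧
    ∀ j : Fin k, |(qp.1 : ℝ) * ζ ^ ((j : ℕ) + 1) - (qp.2 j : ℝ)| ≤ Ψ qp.1}
  have hfst : Prod.fst '' A = {q | 1 ≤ q ∧ IsPowApprox k ζ q (Ψ q)} := by
    ext q
    simp [A, IsPowApprox]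
  have hfib : ∀ q, (A ∩ Prod.fst ⁻¹' {q}).Finite := fun q ↦ by
    refine ((finite_singleton q).prod (finite_Icc (fun j : Fin k ↦ ⌈q * ζ ^ ((j : ℕ) + 1) - Ψ q⌉)
      fun j ↦ ⌊q * ζ ^ ((j : ℕ) + 1) + Ψ q⌋)).subset ?_
    rintro ⟨_, p⟩ ⟨⟨-, hp⟩, rfl⟩
    refine ⟨rfl, fun j ↦ Int.ceil_le.2 ?_, fun j ↦ Int.le_floor.2 ?_⟩ <;>
      linarith [abs_le.1 (hp j)]
  have hA : A.Finite ↔ (Prod.fst '' A).Finite :=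
    ⟨fun h ↦ h.image _, fun h ↦ .of_finite_fibers _ h fun q _ ↦ hfib q⟩
  rw [Set.Infinite, hA, hfst, ← Set.Infinite, ← Nat.frequently_atTop_iff_infinite]
  exact ⟨fun h ↦ h.mono fun _ ↦ And.right,
    fun h ↦ (h.and_eventually (eventually_ge_atTop 1)).mono fun _ ↦ And.symm⟩

theorem den_pow_succ_dvd_of_abs_lt {r : ℚ} {q j : ℕ} {p : ℤ} (hdvd : r.den ^ j ∣ q)
    (h : |(q : ℝ) * r ^ (j + 1) - p| < 1 / r.den) : r.den ^ (j + 1) ∣ q := by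
  obtain ⟨l, rfl⟩ := hdvd
  have hd : (0 : ℝ) < r.den := mod_cast r.pos
  have hr : (r : ℝ) * r.den = r.num := mod_cast r.mul_den_eq_num
  have hint : ((l * r.num ^ (j + 1) - r.den * p : ℤ) : ℝ) =
      r.den * ((r.den ^ j * l : ℕ) * (r : ℝ) ^ (j + 1) - p) := by
    push_cast
    rw [← hr]
    ring
  have hzero : (l * r.num ^ (j + 1) - r.den * p : ℤ) = 0 := by
    rw [lt_div_iff₀' hd, ← abs_of_pos hd, ← abs_mul, ← hint] at h
    exact Int.abs_lt_one_iff.1 (mod_cast h)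
  have hcop : IsCoprime (r.den : ℤ) (r.num ^ (j + 1)) := r.isCoprime_num_den.symm.pow_right
  have hdl : (r.den : ℤ) ∣ l := hcop.dvd_of_dvd_mul_right ⟨p, sub_eq_zero.1 hzero⟩
  rw [pow_succ]
  exact mul_dvd_mul_left _ (Int.natCast_dvd_natCast.1 hdl)

theorem den_pow_dvd_of_abs_sub_le {k : ℕ} {ζ ε : ℝ} {r : ℚ} {q : ℕ} {p : Fin k → ℤ} (hq : 0 < q)
    (hζ : |ζ| ≤ 1 / 2) (hr : |(r : ℝ)| ≤ 1 / 2) (hdvd : r.den ∣ q) (hε : ε < 1 / (2 * q))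
    (hdist : q * |ζ - r| ≤ ε) (hp : ∀ j : Fin k, |(q : ℝ) * ζ ^ ((j : ℕ) + 1) - p j| ≤ ε) :
    r.den ^ k ∣ q := by
  have hq' : (0 : ℝ) < q := mod_cast hq
  have : (0 : ℝ) < r.den := mod_cast r.pos
  suffices ∀ j ≤ k, r.den ^ j ∣ q from this k le_rfl
  intro j hj
  induction j with
  | zero => simp
  | succ j ih =>
    have hpow : |(q : ℝ) * r ^ (j + 1) - q * ζ ^ (j + 1)| ≤ ε := by
      rw [← mul_sub, abs_mul, Nat.abs_cast, abs_sub_comm]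
      exact (mul_le_mul_of_nonneg_left (abs_pow_succ_sub_pow_succ_le hζ hr j) hq'.le).trans hdist
    refine den_pow_succ_dvd_of_abs_lt (p := p ⟨j, hj⟩) (ih (by omega)) ?_
    calc |(q : ℝ) * r ^ (j + 1) - p ⟨j, hj⟩|
        ≤ |(q : ℝ) * r ^ (j + 1) - q * ζ ^ (j + 1)| + |(q : ℝ) * ζ ^ (j + 1) - p ⟨j, hj⟩| :=
          abs_sub_le _ _ _
      _ ≤ ε + ε := add_le_add hpow (hp ⟨j, hj⟩)
      _ < 1 / (2 * q) + 1 / (2 * q) := by gcongr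
      _ = 1 / q := by field_simp; norm_num
      _ ≤ 1 / r.den := by gcongr; exact Nat.le_of_dvd hq hdvd

theorem IsPowApprox.exists_rat {k : ℕ} (hk : 1 ≤ k) {ζ ε : ℝ} (hζ : |ζ| ≤ 1 / 3) {q : ℕ}
    (hq : 2 ≤ q) (hε : ε < 1 / (2 * q)) (h : IsPowApprox k ζ q ε) :
    ∃ r : ℚ, r.den ^ k ∣ q ∧ q * |ζ - r| ≤ ε := by
  obtain ⟨p, hp⟩ := h
  have hq' : (2 : ℝ) ≤ q := mod_cast hq
  set r : ℚ := Rat.divInt (p ⟨0, hk⟩) q with hr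
  have hqr : (q : ℝ) * r = p ⟨0, hk⟩ := by
    rw [hr, Rat.divInt_eq_div]
    push_cast
    field_simp
  have hdist : q * |ζ - r| ≤ ε := by
    rw [← Nat.abs_cast q, ← abs_mul, mul_sub, hqr]
    simpa using hp ⟨0, hk⟩
  have hrle : |(r : ℝ)| ≤ 1 / 2 := by
    have : ε < 1 / (2 * 2) := hε.trans_le (by gcongr)
    have : 2 * |ζ - r| ≤ q * |ζ - r| := by gcongr
    linarith [abs_sub_abs_le_abs_sub (r : ℝ) ζ, abs_sub_comm (r : ℝ) ζ]
  exact ⟨r, den_pow_dvd_of_abs_sub_le (by omega) (by linarith) hrle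
    (Int.natCast_dvd_natCast.1 (Rat.den_dvd _ _)) hε hdist hp, hdist⟩

theorem isPowApprox_den_pow (k : ℕ) {ζ : ℝ} {r : ℚ} (hζ : |ζ| ≤ 1 / 2) (hr : |(r : ℝ)| ≤ 1 / 2) :
    IsPowApprox k ζ (r.den ^ k) (r.den ^ k * |ζ - r|) := by
  refine ⟨fun j ↦ r.num ^ ((j : ℕ) + 1) * r.den ^ (k - (j + 1)), fun j ↦ ?_⟩
  have hnum : ((r.num ^ ((j : ℕ) + 1) * r.den ^ (k - (j + 1)) : ℤ) : ℝ) =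
      r.den ^ k * r ^ ((j : ℕ) + 1) := by
    have hmul : (r : ℝ) * r.den = r.num := mod_cast r.mul_den_eq_num
    push_cast
    rw [← hmul, mul_pow, mul_assoc, ← pow_add, Nat.add_sub_cancel' j.2, mul_comm]
  rw [hnum, Nat.cast_pow, ← mul_sub, abs_mul, abs_of_nonneg (a := (r.den : ℝ) ^ k) (by positivity)]
  exact mul_le_mul_of_nonneg_left (abs_pow_succ_sub_pow_succ_le hζ hr j) (by positivity)

theorem irrational_of_forall_aeval_ne_zero {k : ℕ} (hk : 1 ≤ k) {ζ : ℝ}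
    (h : ∀ P : Polynomial ℤ, P ≠ 0 → P.natDegree ≤ k → Polynomial.aeval ζ P ≠ 0) :
    Irrational ζ := by
  rintro ⟨r, rfl⟩
  have hden : (r.den : ℤ) ≠ 0 := mod_cast r.den_ne_zero
  refine h (Polynomial.C (r.den : ℤ) * Polynomial.X + Polynomial.C (-r.num)) ?_
    (Polynomial.natDegree_linear_le.trans hk) ?_
  · exact fun h0 ↦ hden <| by
      simpa only [Polynomial.coeff_add, Polynomial.coeff_C_mul_X, Polynomial.coeff_C_succ,
        Polynomial.coeff_zero, if_true, add_zero] using congrArg (Polynomial.coeff · 1) h0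
  · have : (r : ℝ) * r.den = r.num := mod_cast r.mul_den_eq_num
    simp [← this, mul_comm]

theorem aeval_ne_zero_of_frequently {k n : ℕ} {ζ : ℝ} (hkn : k < n) (hn : 2 ≤ n)
    (h : ∃ᶠ r : ℚ in denAtTop, |ζ - r| < 1 / (r.den : ℝ) ^ n) {P : Polynomial ℤ} (hP : P ≠ 0)
    (hdeg : P.natDegree ≤ k) : Polynomial.aeval ζ P ≠ 0 := by
  intro hroot
  have hone : ∀ r : ℚ, (1 : ℝ) ≤ r.den := fun r ↦ mod_cast r.pos
  have hirr : Irrational ζ := by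
    rw [← Real.infinite_rat_abs_sub_lt_one_div_den_sq_iff_irrational,
      ← frequently_cofinite_iff_infinite]
    refine (h.mono fun r hr ↦ hr.trans_le ?_).filter_mono denAtTop_le_cofinite
    have := hone r
    gcongr
  obtain ⟨A, hA, hL⟩ := Liouville.exists_pos_real_of_irrational_root hirr hP
    (by rwa [Polynomial.eval_map_algebraMap])
  obtain ⟨r, hr, hrA⟩ := (h.and_eventually ((tendsto_natCast_atTop_atTop.comp
    tendsto_den_denAtTop).eventually_ge_atTop A)).exists
  have hr1 := hone r
  have hpred : ((r.den - 1 : ℕ) : ℝ) + 1 = r.den := mod_cast Nat.sub_add_cancel r.pos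
  have hLr := hL r.num (r.den - 1)
  rw [hpred, ← Rat.cast_def] at hLr
  refine hLr.not_gt ?_
  calc (r.den : ℝ) ^ P.natDegree * (|ζ - r| * A)
      < (r.den : ℝ) ^ P.natDegree * (1 / (r.den : ℝ) ^ n * A) := by gcongr
    _ ≤ (r.den : ℝ) ^ k * (1 / (r.den : ℝ) ^ n * r.den) := by gcongr; exact hrA
    _ = (r.den : ℝ) ^ (k + 1) / (r.den : ℝ) ^ n := by ring
    _ ≤ 1 := by
        rw [div_le_one (by positivity)]
        gcongr
        exact hkn

/-- The quality of approximation by rationals of denominator `q` that corresponds, via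
`isPowApprox_den_pow`, to approximation of the first `k` powers up to `Ψ` with denominator
`q ^ k`. -/
noncomputable def powRate (k : ℕ) (Ψ : ℕ → ℝ) (q : ℕ) : ℝ :=
  Ψ (q ^ k) / (q : ℝ) ^ k

theorem powRate_const_mul (k : ℕ) (c : ℝ) (Ψ : ℕ → ℝ) (q : ℕ) :
    powRate k (fun x ↦ c * Ψ x) q = c * powRate k Ψ q :=
  mul_div_assoc ..

section PowRate

variable {k : ℕ} {Ψ : ℕ → ℝ} (hΨ : ∀ᶠ x in atTop, Ψ x < 1 / (2 * (x : ℝ)))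

include hΨ

theorem eventually_powRate_lt (hk : 1 ≤ k) {n : ℕ} (hn : n ≤ 2 * k) :
    ∀ᶠ q in atTop, powRate k Ψ q < 1 / (2 * (q : ℝ) ^ n) := by
  filter_upwards [(tendsto_pow_atTop (by omega : k ≠ 0)).eventually hΨ,
    eventually_ge_atTop 1] with q hq hq1
  have hq1' : (1 : ℝ) ≤ q := mod_cast hq1
  calc powRate k Ψ q < 1 / (2 * (q ^ k : ℕ)) / (q : ℝ) ^ k := by unfold powRate; gcongr
    _ = 1 / (2 * (q : ℝ) ^ (2 * k)) := by push_cast; rw [div_div]; ring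
    _ ≤ 1 / (2 * (q : ℝ) ^ n) := by gcongr

variable {ζ : ℝ} (hζ : |ζ| ≤ 1 / 3)

include hζ

theorem frequently_isPowApprox_of_frequently_abs_sub_le (hk : 1 ≤ k)
    (h : ∃ᶠ r : ℚ in denAtTop, |ζ - r| ≤ powRate k Ψ r.den) :
    ∃ᶠ q in atTop, IsPowApprox k ζ q (Ψ q) := by
  refine ((tendsto_pow_atTop (by omega : k ≠ 0)).comp tendsto_den_denAtTop).frequently ?_
  refine (h.and_eventually ((tendsto_den_denAtTop.eventually
    (eventually_powRate_lt hΨ hk (n := 1) (by omega))).and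
      (tendsto_den_denAtTop.eventually_ge_atTop 3))).mono fun r ⟨hr, hlt, h3⟩ ↦ ?_
  have h3' : (3 : ℝ) ≤ r.den := mod_cast h3
  have hrle : |(r : ℝ)| ≤ 1 / 2 := by
    have : 1 / (2 * (r.den : ℝ) ^ 1) ≤ 1 / (2 * 3) := by rw [pow_one]; gcongr
    linarith [abs_sub_abs_le_abs_sub (r : ℝ) ζ, abs_sub_comm (r : ℝ) ζ]
  obtain ⟨p, hp⟩ := isPowApprox_den_pow k (hζ.trans (by norm_num)) hrle
  refine ⟨p, fun j ↦ (hp j).trans ?_⟩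
  rw [powRate, le_div_iff₀' (by positivity)] at hr
  exact hr

theorem frequently_abs_sub_le_of_frequently_isPowApprox (hk : 1 ≤ k)
    (hmul : ∀ l x : ℕ, 1 ≤ l → 1 ≤ x → Ψ (l * x) ≤ l * Ψ x) (hirr : Irrational ζ)
    (h : ∃ᶠ q in atTop, IsPowApprox k ζ q (Ψ q)) :
    ∃ᶠ r : ℚ in denAtTop, |ζ - r| ≤ powRate k Ψ r.den := by
  refine frequently_denAtTop.2 fun m ↦ ?_
  have hlim : Tendsto (fun q : ℕ ↦ 1 / 2 * (1 / (q : ℝ))) atTop (nhds 0) := by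
    simpa using tendsto_one_div_atTop_nhds_zero_nat.const_mul (1 / 2 : ℝ)
  obtain ⟨q, hq, hΨq, hfar, hq2⟩ := (h.and_eventually (hΨ.and
    ((hlim.eventually (hirr.eventually_forall_le_dist_cast_rat_of_den_le m)).and
      (eventually_ge_atTop 2)))).exists
  obtain ⟨r, ⟨l, hl⟩, hdist⟩ := hq.exists_rat hk hζ hq2 hΨq
  have hq2' : (2 : ℝ) ≤ q := mod_cast hq2
  refine ⟨r, le_of_not_ge fun hrm ↦ (hfar r hrm).not_gt ?_, ?_⟩
  · rw [Real.dist_eq, mul_one_div, div_div, mul_comm]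
    calc |ζ - r| ≤ q * |ζ - r| := le_mul_of_one_le_left (abs_nonneg _) (by linarith)
      _ < 1 / (q * 2) := by rw [mul_comm (q : ℝ) 2]; exact hdist.trans_lt hΨq
  · have hl1 : 1 ≤ l := Nat.one_le_iff_ne_zero.2 fun h0 ↦ by simp [h0] at hl; omega
    have hl0 : (0 : ℝ) < l := mod_cast hl1
    have : (0 : ℝ) < r.den := mod_cast r.pos
    rw [powRate, le_div_iff₀' (by positivity)]
    refine le_of_mul_le_mul_left ?_ hl0
    calc (l : ℝ) * (r.den ^ k * |ζ - r|) = q * |ζ - r| := by rw [hl]; push_cast; ring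
      _ ≤ Ψ q := hdist
      _ ≤ l * Ψ (r.den ^ k) := by
          rw [hl, mul_comm (r.den ^ k)]
          exact hmul _ _ hl1 (Nat.one_le_pow _ _ r.pos)

theorem mem_Kk_iff_frequently_abs_sub_le (hk : 1 ≤ k)
    (hmul : ∀ l x : ℕ, 1 ≤ l → 1 ≤ x → Ψ (l * x) ≤ l * Ψ x) :
    ζ ∈ Kk k Ψ ↔ ∃ᶠ r : ℚ in denAtTop, |ζ - r| ≤ powRate k Ψ r.den := by
  refine ⟨fun ⟨halg, hinf⟩ ↦ frequently_abs_sub_le_of_frequently_isPowApprox hΨ hζ hk hmul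
    (irrational_of_forall_aeval_ne_zero hk halg) (infinite_setOf_powApprox_iff.1 hinf),
    fun h ↦ ⟨fun P ↦ aeval_ne_zero_of_frequently (n := 2 * k) (by omega) (by omega) ?_,
      infinite_setOf_powApprox_iff.2
        (frequently_isPowApprox_of_frequently_abs_sub_le hΨ hζ hk h)⟩⟩
  refine (h.and_eventually (tendsto_den_denAtTop.eventually
    (eventually_powRate_lt hΨ hk le_rfl))).mono fun r ⟨hr, hlt⟩ ↦ (hr.trans_lt hlt).trans_le ?_
  have : (0 : ℝ) < (r.den : ℝ) ^ (2 * k) := pow_pos (mod_cast r.pos) _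
  gcongr
  linarith

theorem mem_Kk_const_mul_iff_frequently_abs_sub_le (hk : 1 ≤ k)
    (hmul : ∀ l x : ℕ, 1 ≤ l → 1 ≤ x → Ψ (l * x) ≤ l * Ψ x) {c : ℝ} (hc0 : 0 < c) (hc1 : c ≤ 1) :
    ζ ∈ Kk k (fun x ↦ c * Ψ x) ↔ ∃ᶠ r : ℚ in denAtTop, |ζ - r| ≤ c * powRate k Ψ r.den := by
  have hcΨ : ∀ᶠ x in atTop, c * Ψ x < 1 / (2 * (x : ℝ)) := hΨ.mono fun x hx ↦
    (mul_lt_mul_of_pos_left hx hc0).trans_le (mul_le_of_le_one_left (by positivity) hc1)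
  have hcmul : ∀ l x : ℕ, 1 ≤ l → 1 ≤ x → c * Ψ (l * x) ≤ l * (c * Ψ x) := fun l x hl hx ↦ by
    rw [mul_left_comm]
    exact mul_le_mul_of_nonneg_left (hmul l x hl hx) hc0.le
  simp only [mem_Kk_iff_frequently_abs_sub_le hcΨ hζ hk hcmul, powRate_const_mul]

end PowRate

/-- For `k ≥ 2`, `b ≥ 3`, the `{0,1}`-digit set `K_{J(b)}`, and `Ψ` positive with
`Ψ(x) < 1/(2x)` for large `x` and `Ψ(l·x) ≤ l·Ψ(x)`, the set
`(𝒦_k(Ψ) \ ⋃_{0<c<1/(b-1)} 𝒦_k(cΨ)) ∩ K_{J(b)}` is uncountable. -/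
theorem powers_missing_digit_strong (k b : ℕ) (hk : 2 ≤ k) (hb : 3 ≤ b)
    (Ψ : ℕ → ℝ) (hpos : ∀ q, 0 < Ψ q)
    (hA3 : ∃ N : ℕ, ∀ x : ℕ, N ≤ x → Ψ x < 1 / (2 * (x : ℝ)))
    (hB2 : ∀ l x : ℕ, 1 ≤ l → 1 ≤ x → Ψ (l * x) ≤ (l : ℝ) * Ψ x) :
    ¬ ((Kk k Ψ \ ⋃ c ∈ Ioo (0 : ℝ) (1 / ((b : ℝ) - 1)), Kk k (fun x => c * Ψ x)) ∩
        baseExpSet b {0, 1}).Countable := by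
  intro hcount
  obtain ⟨z, hz⟩ := countable_iff_exists_subset_range.1 hcount
  have hΨ : ∀ᶠ x in atTop, Ψ x < 1 / (2 * (x : ℝ)) := eventually_atTop.2 hA3
  have hrate : ∀ᶠ q in atTop, 0 < powRate k Ψ q ∧ powRate k Ψ q < 1 / (2 * (q : ℝ) ^ 4) := by
    filter_upwards [eventually_powRate_lt hΨ (k := k) (n := 4) (by omega) (by omega),
      eventually_gt_atTop 0] with q hlt hq
    exact ⟨div_pos (hpos _) (by positivity), hlt⟩
  obtain ⟨ζ, hmem, hζ, hζz, hfreq, hev⟩ := exists_mem_baseExpSet_frequently_eventually hb hrate z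
  have hζ' : |ζ| ≤ 1 / 3 := by rwa [abs_of_nonneg hmem.1.1]
  have hin : ζ ∈ Kk k Ψ := (mem_Kk_iff_frequently_abs_sub_le hΨ hζ' (by omega) hB2).2 hfreq
  have hout : ∀ c ∈ Ioo (0 : ℝ) (1 / (b - 1)), ζ ∉ Kk k fun x ↦ c * Ψ x := fun c hc hcK ↦ by
    have hb' : (3 : ℝ) ≤ b := mod_cast hb
    have hc1 : c ≤ 1 := hc.2.le.trans ((div_le_one (by linarith)).2 (by linarith))
    exact (mem_Kk_const_mul_iff_frequently_abs_sub_le hΨ hζ' (by omega) hB2 hc.1 hc1).1 hcK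
      ((hev c hc.2).mono fun _ ↦ not_le_of_gt)
  exact hζz (hz ⟨⟨hin, by simpa only [mem_iUnion₂, not_exists] using hout⟩, hmem⟩)
end

section
/- Let k ≥ 2 be an integer and ζ > 0 a positive irrational real number, and set L_k(ζ) := max_{1≤j≤k} j·ζ^{j−1}. Let Ψ : ℕ → (0,∞) satisfy Ψ(l·x) ≤ l·Ψ(x) for all positive integers l, x, and additionally either (i) ζ ∈ (0,1/2) and Ψ(x) < 1/(2x) for all sufficiently large x, or (ii) Ψ(x) < d/x for all sufficiently large x, where d = (1/2)·L_k(ζ)^{−1} − ε for some ε > 0. Then every solution (z, y₁, …, y_k) ∈ ℕ × ℤ^k of max_{1≤j≤k} |ζ^j·z − y_j| ≤ Ψ(z) with z sufficiently large is an integral multiple of a solution of the form (z₀^k, z₀^{k−1}·y₀, …, y₀^k) with gcd(y₀, z₀) = 1. In particular, if max_{1≤j≤k} |ζ^j·z − y_j| ≤ Ψ(z) has arbitrarily large solutions, then it has solutions with z = q^k for a positive integer q satisfying ‖ζ·q‖ ≤ q^{−2k+1}. -/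
open Filter Set

/-- `distNearestInt x` is the distance from `x` to the nearest integer. -/
noncomputable def distNearestInt (x : ℝ) : ℝ := |x - (round x : ℤ)|

/-- `Lk k t = max_{1≤j≤k} j·t^{j-1}`. -/
noncomputable def Lk (k : ℕ) (t : ℝ) : ℝ :=
  ⨆ j : Fin k, (((j : ℕ) : ℝ) + 1) * t ^ (j : ℕ)

/-!
If `(z, y)` is a solution and `ρ = y₁ / z` has denominator `q` in lowest terms, then
`|ρ - ζ| ≤ Ψ(z) / z`, and since `t ↦ t^j` is Lipschitz with constant `L_k(r)` on `[-r, r]`, each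
`y_j` lies within `(1 + L_k(r)) Ψ(z) < 1/z ≤ 1/q` of `z ρ^j`, where `r` is slightly larger than
`|ζ|`, or `r = 1/2` in case (i) since `L_k(1/2) = 1`. As soon as `q^{j-1} ∣ z`, the number
`q z ρ^j` is an integer at distance less than `1` from `q y_j`, so `z ρ^j = y_j`; this in turn
forces `q^j ∣ z`. After `k` steps `q^k ∣ z` and `y_j = z ρ^j` for all `j`.
-/

/-- `(z, y₁, …, y_k)` solves `max_{1≤j≤k} |ζ^j·z - y_j| ≤ Ψ(z)`. The coordinate `y_j` is stored
at the index `j - 1`. -/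
def IsSolution {k : ℕ} (ζ : ℝ) (Ψ : ℕ → ℝ) (z : ℕ) (y : Fin k → ℤ) : Prop :=
  ∀ j : Fin k, |ζ ^ ((j : ℕ) + 1) * (z : ℝ) - (y j : ℝ)| ≤ Ψ z

/-- The tuple `(q^{k-1}·p, q^{k-2}·p², …, p^k)`, which together with `z = q^k` is the vector of
the theorem with `z₀ = q` and `y₀ = p`. The subtraction in the exponent never truncates. -/
def powerTuple (k q : ℕ) (p : ℤ) : Fin k → ℤ :=
  fun j => (q : ℤ) ^ (k - ((j : ℕ) + 1)) * p ^ ((j : ℕ) + 1)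

section Lk

lemma le_Lk {k : ℕ} (t : ℝ) (j : Fin k) : ((j : ℕ) + 1 : ℝ) * t ^ (j : ℕ) ≤ Lk k t :=
  le_ciSup (f := fun j : Fin k => ((j : ℕ) + 1 : ℝ) * t ^ (j : ℕ)) (finite_range _).bddAbove j

variable (k : ℕ) [NeZero k]

lemma one_le_Lk (t : ℝ) : 1 ≤ Lk k t := by
  simpa using le_Lk t (0 : Fin k)

lemma Lk_one_half_le_one : Lk k (1 / 2) ≤ 1 := by
  refine ciSup_le fun j => ?_
  have hj : ((j : ℕ) + 1 : ℝ) ≤ 2 ^ (j : ℕ) := mod_cast Nat.lt_two_pow_self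
  rw [one_div, inv_pow, ← div_eq_mul_inv]
  exact div_le_one_of_le₀ hj (by positivity)

lemma eventually_Lk_le {t D : ℝ} (hD : Lk k t < D) : ∀ᶠ r in nhds t, Lk k r ≤ D := by
  have hterm (j : Fin k) : ∀ᶠ r in nhds t, ((j : ℕ) + 1 : ℝ) * r ^ (j : ℕ) < D :=
    ContinuousAt.eventually_lt (by fun_prop) continuousAt_const ((le_Lk t j).trans_lt hD)
  filter_upwards [eventually_all.2 hterm] with r hr
  exact ciSup_le fun j => (hr j).le

end Lk

lemma abs_pow_sub_pow_le_Lk_mul {k : ℕ} {s t r : ℝ} (hs : |s| ≤ r) (ht : |t| ≤ r) (j : Fin k) :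
    |s ^ ((j : ℕ) + 1) - t ^ ((j : ℕ) + 1)| ≤ Lk k r * |s - t| :=
  calc |s ^ ((j : ℕ) + 1) - t ^ ((j : ℕ) + 1)|
      ≤ |s - t| * ((j : ℕ) + 1 : ℕ) * max |s| |t| ^ (j : ℕ) := abs_pow_sub_pow_le ..
    _ ≤ |s - t| * ((j : ℕ) + 1 : ℕ) * r ^ (j : ℕ) := by gcongr; exact max_le hs ht
    _ = ((j : ℕ) + 1) * r ^ (j : ℕ) * |s - t| := by push_cast; ring
    _ ≤ Lk k r * |s - t| := by gcongr; exact le_Lk r j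

section Rational

variable {ρ : ℚ} {z : ℕ}

lemma mul_pow_eq_of_abs_sub_mul_den_lt {n : ℕ} {m : ℤ} (hz : ρ.den ^ n ∣ z)
    (h : |z * ρ ^ (n + 1) - m| * ρ.den < 1) : z * ρ ^ (n + 1) = m := by
  obtain ⟨w, rfl⟩ := hz
  have hclear : (((ρ.den ^ n * w : ℕ) : ℚ) * ρ ^ (n + 1) - m) * ρ.den =
      ((w * ρ.num ^ (n + 1) - m * ρ.den : ℤ) : ℚ) := by
    push_cast
    rw [← Rat.mul_den_eq_num ρ]
    ring
  have hzero : w * ρ.num ^ (n + 1) - m * ρ.den = 0 := by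
    rw [← Int.abs_lt_one_iff]
    rw [← Nat.abs_cast ρ.den, ← abs_mul, hclear] at h
    exact_mod_cast h
  rw [hzero, Int.cast_zero, mul_eq_zero] at hclear
  exact sub_eq_zero.1 (hclear.resolve_right (mod_cast ρ.den_ne_zero))

lemma den_pow_dvd_of_mul_pow_eq {n : ℕ} {m : ℤ} (h : z * ρ ^ n = m) : ρ.den ^ n ∣ z := by
  rcases eq_or_ne z 0 with rfl | hz
  · exact dvd_zero _
  have hρ : ρ ^ n = Rat.divInt m z := by
    rw [Rat.divInt_eq_div, Int.cast_natCast, eq_div_iff (mod_cast hz), mul_comm, h]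
  rw [← Rat.den_pow, hρ]
  exact_mod_cast Rat.den_dvd m z

lemma den_pow_dvd_of_abs_sub_mul_den_lt {k : ℕ} {y : Fin k → ℤ}
    (h : ∀ j : Fin k, |z * ρ ^ ((j : ℕ) + 1) - y j| * ρ.den < 1) : ρ.den ^ k ∣ z := by
  suffices ∀ n ≤ k, ρ.den ^ n ∣ z from this k le_rfl
  intro n hn
  induction n with
  | zero => simp
  | succ n ih =>
    exact den_pow_dvd_of_mul_pow_eq
      (mul_pow_eq_of_abs_sub_mul_den_lt (ih (Nat.le_of_succ_le hn)) (h ⟨n, hn⟩))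

lemma exists_eq_mul_powerTuple_of_abs_sub_mul_den_lt {k : ℕ} {y : Fin k → ℤ}
    (h : ∀ j : Fin k, |z * ρ ^ ((j : ℕ) + 1) - y j| * ρ.den < 1) :
    ∃ M : ℕ, z = M * ρ.den ^ k ∧ ∀ j, y j = M * powerTuple k ρ.den ρ.num j := by
  have hdvd := den_pow_dvd_of_abs_sub_mul_den_lt h
  have ⟨M, hM⟩ := hdvd
  refine ⟨M, by rw [hM, mul_comm], fun j => ?_⟩
  have hyj : z * ρ ^ ((j : ℕ) + 1) = y j :=
    mul_pow_eq_of_abs_sub_mul_den_lt ((pow_dvd_pow _ j.2.le).trans hdvd) (h j)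
  have hk : ρ.den ^ k = ρ.den ^ (k - ((j : ℕ) + 1)) * ρ.den ^ ((j : ℕ) + 1) := by
    rw [← pow_add, Nat.sub_add_cancel j.2]
  have hcast : (y j : ℚ) = (M * powerTuple k ρ.den ρ.num j : ℤ) := by
    rw [← hyj, hM, hk, powerTuple]
    push_cast
    rw [← Rat.mul_den_eq_num ρ]
    ring
  exact_mod_cast hcast

end Rational

namespace IsSolution

variable {k : ℕ} {ζ r : ℝ} {Ψ : ℕ → ℝ} {z : ℕ} {y : Fin k → ℤ}

lemma of_mul {M : ℕ} (hM : 0 < M) (hΨ : Ψ (M * z) ≤ M * Ψ z)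
    (h : IsSolution ζ Ψ (M * z) fun j => M * y j) : IsSolution ζ Ψ z y := by
  intro j
  have hM' : (0 : ℝ) < M := mod_cast hM
  refine le_of_mul_le_mul_left ?_ hM'
  calc M * |ζ ^ ((j : ℕ) + 1) * z - y j|
      = |ζ ^ ((j : ℕ) + 1) * (M * z : ℕ) - (M * y j : ℤ)| := by
        rw [← Nat.abs_cast M, ← abs_mul]
        push_cast
        ring_nf
    _ ≤ M * Ψ z := (h j).trans hΨ

variable [NeZero k]

lemma nonneg (h : IsSolution ζ Ψ z y) : 0 ≤ Ψ z :=
  (abs_nonneg _).trans (h 0)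

lemma mul_abs_sub_le (h : IsSolution ζ Ψ z y) (hz : 0 < z) : z * |(y 0 / z : ℝ) - ζ| ≤ Ψ z := by
  have hz' : (0 : ℝ) < z := mod_cast hz
  have hfirst : |ζ * z - y 0| ≤ Ψ z := by simpa using h 0
  rwa [← abs_of_pos hz', ← abs_mul, abs_of_pos hz', mul_sub, mul_div_cancel₀ _ hz'.ne',
    abs_sub_comm, mul_comm]

lemma abs_mul_pow_sub_le (h : IsSolution ζ Ψ z y) (hz : 0 < z) (hζ : |ζ| ≤ r)
    (hy : |(y 0 / z : ℝ)| ≤ r) (j : Fin k) :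
    |(z : ℝ) * (y 0 / z : ℝ) ^ ((j : ℕ) + 1) - y j| ≤ (1 + Lk k r) * Ψ z := by
  set ρ : ℝ := y 0 / z
  have hL : 0 ≤ Lk k r := zero_le_one.trans (one_le_Lk k r)
  calc |z * ρ ^ ((j : ℕ) + 1) - y j|
      = |z * (ρ ^ ((j : ℕ) + 1) - ζ ^ ((j : ℕ) + 1)) + (ζ ^ ((j : ℕ) + 1) * z - y j)| := by
        ring_nf
    _ ≤ z * |ρ ^ ((j : ℕ) + 1) - ζ ^ ((j : ℕ) + 1)| + |ζ ^ ((j : ℕ) + 1) * z - y j| := by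
        rw [← Nat.abs_cast z, ← abs_mul, Nat.abs_cast]
        exact abs_add_le _ _
    _ ≤ z * (Lk k r * |ρ - ζ|) + Ψ z := by
        gcongr
        exacts [abs_pow_sub_pow_le_Lk_mul hy hζ j, h j]
    _ = Lk k r * (z * |ρ - ζ|) + Ψ z := by ring
    _ ≤ Lk k r * Ψ z + Ψ z := by
        gcongr
        exact h.mul_abs_sub_le hz
    _ = (1 + Lk k r) * Ψ z := by ring

lemma mul_lt_one (h : IsSolution ζ Ψ z y) (hΨ : (1 + Lk k r) * (Ψ z * z) < 1) : Ψ z * z < 1 :=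
  (le_mul_of_one_le_left (mul_nonneg h.nonneg z.cast_nonneg)
    (by linarith [one_le_Lk k r])).trans_lt hΨ

lemma abs_div_le (h : IsSolution ζ Ψ z y) (hz : 0 < z) (hr : |ζ| + 1 / z ≤ r)
    (hΨ : Ψ z * z < 1) : |(y 0 / z : ℝ)| ≤ r := by
  have hz1 : (1 : ℝ) ≤ z := mod_cast hz
  have hΨ1 : Ψ z ≤ 1 := (le_mul_of_one_le_right h.nonneg hz1).trans hΨ.le
  have hdist : |(y 0 / z : ℝ) - ζ| ≤ 1 / z := by
    rw [le_div_iff₀ (by positivity), mul_comm]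
    exact (h.mul_abs_sub_le hz).trans hΨ1
  linarith [abs_sub_abs_le_abs_sub (y 0 / z : ℝ) ζ]

lemma exists_eq_mul_powerTuple (h : IsSolution ζ Ψ z y) (hz : 0 < z) (hr : |ζ| + 1 / z ≤ r)
    (hΨ : (1 + Lk k r) * (Ψ z * z) < 1) :
    ∃ (M q : ℕ) (p : ℤ), 0 < M ∧ 0 < q ∧ Int.gcd p q = 1 ∧ z = M * q ^ k ∧
      ∀ j, y j = M * powerTuple k q p j := by
  obtain ⟨ρ, hρ⟩ : ∃ ρ : ℚ, ρ = y 0 / z := ⟨_, rfl⟩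
  have hρ_cast : (y 0 / z : ℝ) = ρ := by rw [hρ]; push_cast; rfl
  have hden : ρ.den ≤ z := Nat.le_of_dvd hz <| by
    rw [← pow_one ρ.den]
    exact den_pow_dvd_of_mul_pow_eq (m := y 0) (by rw [hρ]; field_simp)
  have hζ : |ζ| ≤ r := by linarith [show (0 : ℝ) ≤ 1 / z by positivity]
  have happrox (j : Fin k) : |z * ρ ^ ((j : ℕ) + 1) - y j| * ρ.den < 1 := by
    have hreal : |(z : ℝ) * (y 0 / z : ℝ) ^ ((j : ℕ) + 1) - y j| * ρ.den < 1 :=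
      calc |(z : ℝ) * (y 0 / z : ℝ) ^ ((j : ℕ) + 1) - y j| * ρ.den
          ≤ |(z : ℝ) * (y 0 / z : ℝ) ^ ((j : ℕ) + 1) - y j| * z := by gcongr
        _ ≤ (1 + Lk k r) * Ψ z * z := by
            gcongr
            exact h.abs_mul_pow_sub_le hz hζ (h.abs_div_le hz hr (h.mul_lt_one hΨ)) j
        _ < 1 := by rwa [mul_assoc]
    rw [hρ_cast] at hreal
    exact_mod_cast hreal
  obtain ⟨M, hM, hy⟩ := exists_eq_mul_powerTuple_of_abs_sub_mul_den_lt happrox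
  have hM0 : 0 < M := Nat.pos_of_mul_pos_right (hM ▸ hz)
  exact ⟨M, ρ.den, ρ.num, hM0, ρ.den_pos, ρ.reduced, hM, hy⟩

lemma distNearestInt_le {M q : ℕ} {p : ℤ} (hM : 0 < M) (hq : 0 < q)
    (h : IsSolution ζ Ψ (M * q ^ k) fun j => M * powerTuple k q p j)
    (hΨ : Ψ (M * q ^ k) * (M * q ^ k : ℕ) < 1) :
    distNearestInt (ζ * q) ≤ ((q : ℝ) ^ (2 * k - 1))⁻¹ := by
  obtain ⟨m, rfl⟩ := Nat.exists_eq_succ_of_ne_zero (NeZero.ne k)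
  have hM1 : (1 : ℝ) ≤ M := mod_cast hM
  have hfirst : M * (q : ℝ) ^ m * |ζ * q - p| ≤ Ψ (M * q ^ (m + 1)) := by
    refine le_of_eq_of_le ?_ (h 0)
    rw [← abs_of_nonneg (by positivity : 0 ≤ M * (q : ℝ) ^ m), ← abs_mul]
    congr 1
    simp only [powerTuple, Fin.val_zero, Nat.succ_eq_add_one, zero_add, Nat.add_sub_cancel, pow_one]
    push_cast
    ring
  refine (round_le (ζ * q) p).trans ?_
  rw [← one_div, le_div_iff₀ (by positivity)]
  calc |ζ * q - p| * (q : ℝ) ^ (2 * (m + 1) - 1)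
      ≤ M * M * (|ζ * q - p| * (q : ℝ) ^ (2 * (m + 1) - 1)) :=
        le_mul_of_one_le_left (by positivity) (one_le_mul_of_one_le_of_one_le hM1 hM1)
    _ = M * (q : ℝ) ^ m * |ζ * q - p| * (M * q ^ (m + 1) : ℕ) := by
        rw [show 2 * (m + 1) - 1 = m + (m + 1) by omega, pow_add]
        push_cast
        ring
    _ ≤ Ψ (M * q ^ (m + 1)) * (M * q ^ (m + 1) : ℕ) := by gcongr
    _ ≤ 1 := hΨ.le

end IsSolution

lemma one_add_mul_half_inv_sub_lt_one {L L' ε : ℝ} (hL : 1 ≤ L) (hL' : 0 ≤ L') (hε : 0 < ε)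
    (h : L' ≤ L + ε) : (1 + L') * (1 / 2 * L⁻¹ - ε) < 1 := by
  have hinv : L⁻¹ ≤ 1 := inv_le_one_of_one_le₀ hL
  have hmul : (L + ε) * L⁻¹ ≤ 1 + ε := by
    rw [add_mul, mul_inv_cancel₀ (by positivity)]
    linarith [mul_le_of_le_one_right hε.le hinv]
  have hmul' : L' * L⁻¹ ≤ (L + ε) * L⁻¹ := by gcongr
  linarith [mul_nonneg hL' hε.le]

lemma exists_radius (k : ℕ) [NeZero k] {ζ : ℝ} {Ψ : ℕ → ℝ}
    (hA : (|ζ| < 1 / 2 ∧ ∃ N : ℕ, ∀ x : ℕ, N ≤ x → Ψ x < 1 / (2 * (x : ℝ))) ∨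
      (∃ ε : ℝ, 0 < ε ∧ ∃ N : ℕ, ∀ x : ℕ, N ≤ x →
        Ψ x < (1 / 2 * (Lk k |ζ|)⁻¹ - ε) / (x : ℝ))) :
    ∃ r, |ζ| < r ∧ ∀ᶠ x : ℕ in atTop, (1 + Lk k r) * (Ψ x * x) < 1 := by
  have hpos (r : ℝ) : 0 < 1 + Lk k r := by linarith [one_le_Lk k r]
  rcases hA with ⟨hζ, hΨ⟩ | ⟨ε, hε, hΨ⟩
  · refine ⟨1 / 2, hζ, ?_⟩
    filter_upwards [eventually_atTop.2 hΨ, eventually_gt_atTop 0] with x hx hx0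
    have hx' : Ψ x * x < 1 / 2 := by
      rw [← lt_div_iff₀ (by positivity), div_div]
      exact hx
    calc (1 + Lk k (1 / 2)) * (Ψ x * x) < (1 + Lk k (1 / 2)) * (1 / 2) := by
          gcongr
          exact hpos _
      _ ≤ 1 := by linarith [Lk_one_half_le_one k]
  · have hnear : ∀ᶠ r in nhdsWithin |ζ| (Ioi |ζ|), Lk k r ≤ Lk k |ζ| + ε :=
      (eventually_Lk_le k (lt_add_of_pos_right _ hε)).filter_mono nhdsWithin_le_nhds
    obtain ⟨r, hLr, hr⟩ := (hnear.and self_mem_nhdsWithin).exists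
    refine ⟨r, hr, ?_⟩
    filter_upwards [eventually_atTop.2 hΨ, eventually_gt_atTop 0] with x hx hx0
    calc (1 + Lk k r) * (Ψ x * x) < (1 + Lk k r) * (1 / 2 * (Lk k |ζ|)⁻¹ - ε) := by
          gcongr
          exacts [hpos r, (lt_div_iff₀ (by positivity)).1 hx]
      _ < 1 := one_add_mul_half_inv_sub_lt_one (one_le_Lk k _)
          (zero_le_one.trans (one_le_Lk k r)) hε hLr

theorem solutions_are_powers_general (k : ℕ) [NeZero k] (ζ : ℝ) (Ψ : ℕ → ℝ)
    (hB2 : ∀ l x : ℕ, 1 ≤ l → 1 ≤ x → Ψ (l * x) ≤ (l : ℝ) * Ψ x)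
    (hA : (|ζ| < 1 / 2 ∧ ∃ N : ℕ, ∀ x : ℕ, N ≤ x → Ψ x < 1 / (2 * (x : ℝ))) ∨
      (∃ ε : ℝ, 0 < ε ∧ ∃ N : ℕ, ∀ x : ℕ, N ≤ x →
        Ψ x < (1 / 2 * (Lk k |ζ|)⁻¹ - ε) / (x : ℝ))) :
    (∃ Z : ℕ, ∀ (z : ℕ) (y : Fin k → ℤ), Z ≤ z → IsSolution ζ Ψ z y →
      ∃ (M z₀ : ℕ) (y₀ : ℤ), 0 < M ∧ 0 < z₀ ∧ Int.gcd y₀ (z₀ : ℤ) = 1 ∧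
        z = M * z₀ ^ k ∧ ∀ j : Fin k, y j = M * powerTuple k z₀ y₀ j) ∧
    ((∀ Z : ℕ, ∃ (z : ℕ) (y : Fin k → ℤ), Z ≤ z ∧ IsSolution ζ Ψ z y) →
      ∃ (q : ℕ) (y : Fin k → ℤ), 0 < q ∧ IsSolution ζ Ψ (q ^ k) y ∧
        distNearestInt (ζ * (q : ℝ)) ≤ ((q : ℝ) ^ (2 * k - 1))⁻¹) := by
  obtain ⟨r, hr, hΨ⟩ := exists_radius k hA
  have hclose : ∀ᶠ z : ℕ in atTop, |ζ| + 1 / z ≤ r := by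
    filter_upwards [tendsto_one_div_atTop_nhds_zero_nat.eventually_lt_const (sub_pos.2 hr)]
      with z hz using by linarith
  obtain ⟨Z, hZ⟩ := eventually_atTop.1 ((eventually_gt_atTop 0).and (hclose.and hΨ))
  refine ⟨⟨Z, fun z y hz hy => ?_⟩, fun hinf => ?_⟩
  · obtain ⟨hz0, hzr, hzΨ⟩ := hZ z hz
    exact hy.exists_eq_mul_powerTuple hz0 hzr hzΨ
  · obtain ⟨z, y, hz, hy⟩ := hinf Z
    obtain ⟨hz0, hzr, hzΨ⟩ := hZ z hz
    obtain ⟨M, q, p, hM, hq, -, rfl, hyp⟩ := hy.exists_eq_mul_powerTuple hz0 hzr hzΨ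
    obtain rfl : y = fun j => M * powerTuple k q p j := funext hyp
    exact ⟨q, powerTuple k q p, hq, hy.of_mul hM (hB2 M _ hM (Nat.one_le_pow _ _ hq)),
      hy.distNearestInt_le hM hq (hy.mul_lt_one hzΨ)⟩

/-- For `k ≥ 2`, `ζ > 0` irrational, and `Ψ` positive with `Ψ(l·x) ≤ l·Ψ(x)` and either
(i) `ζ ∈ (0,1/2)` and `Ψ(x) < 1/(2x)` for large `x`, or (ii) `Ψ(x) < d/x` for large `x`
with `d = (1/2)·L_k(ζ)⁻¹ - ε`, `ε > 0`: all large solutions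
`(z, y₁, …, y_k)` of `max_{1≤j≤k} |ζ^j·z - y_j| ≤ Ψ(z)` are integral multiples of
solutions `(z₀^k, z₀^{k-1}y₀, …, y₀^k)` with `gcd(y₀, z₀) = 1`; in particular, if there
are arbitrarily large solutions then there is a solution with `z = q^k` for a positive
integer `q` satisfying `‖ζ·q‖ ≤ q^{-2k+1}`. -/
theorem solutions_are_powers (k : ℕ) (hk : 2 ≤ k) (ζ : ℝ) (hζ0 : 0 < ζ)
    (hirr : Irrational ζ) (Ψ : ℕ → ℝ) (hpos : ∀ q, 0 < Ψ q)
    (hB2 : ∀ l x : ℕ, 1 ≤ l → 1 ≤ x → Ψ (l * x) ≤ (l : ℝ) * Ψ x)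
    (hA : (ζ < 1 / 2 ∧ ∃ N : ℕ, ∀ x : ℕ, N ≤ x → Ψ x < 1 / (2 * (x : ℝ))) ∨
      (∃ ε : ℝ, 0 < ε ∧ ∃ N : ℕ, ∀ x : ℕ, N ≤ x →
        Ψ x < (1 / 2 * (Lk k ζ)⁻¹ - ε) / (x : ℝ))) :
    (∃ Z : ℕ, ∀ (z : ℕ) (y : Fin k → ℤ), Z ≤ z →
      (∀ j : Fin k, |ζ ^ ((j : ℕ) + 1) * (z : ℝ) - (y j : ℝ)| ≤ Ψ z) →
      ∃ (M z₀ : ℕ) (y₀ : ℤ), 0 < M ∧ 0 < z₀ ∧ Int.gcd y₀ (z₀ : ℤ) = 1 ∧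
        z = M * z₀ ^ k ∧
        ∀ j : Fin k, y j = (M : ℤ) * (z₀ : ℤ) ^ (k - ((j : ℕ) + 1)) * y₀ ^ ((j : ℕ) + 1)) ∧
    ((∀ Z : ℕ, ∃ (z : ℕ) (y : Fin k → ℤ), Z ≤ z ∧ 1 ≤ z ∧
        ∀ j : Fin k, |ζ ^ ((j : ℕ) + 1) * (z : ℝ) - (y j : ℝ)| ≤ Ψ z) →
      ∃ (q : ℕ) (y : Fin k → ℤ), 0 < q ∧
        (∀ j : Fin k, |ζ ^ ((j : ℕ) + 1) * ((q ^ k : ℕ) : ℝ) - (y j : ℝ)| ≤ Ψ (q ^ k)) ∧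
        distNearestInt (ζ * (q : ℝ)) ≤ ((q : ℝ) ^ (2 * k - 1))⁻¹) := by
  have : NeZero k := ⟨by omega⟩
  obtain ⟨hpow, hinf⟩ := solutions_are_powers_general k ζ Ψ hB2 (by rwa [abs_of_pos hζ0])
  simp only [powerTuple, ← mul_assoc] at hpow
  exact ⟨hpow, fun h => hinf fun Z => (h Z).imp fun z => .imp fun y ⟨hz, _, hy⟩ => ⟨hz, hy⟩⟩
end
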